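/- Let $g \ge 1$ and let $G$ be a group containing elements $c_1,\dots,c_{2g+1}$ satisfying the braid relations. Set $\bar d_j = c_{j+1}^{-1} c_j c_{j+1}$ and $e_{j+1} = c_j c_{j+1} c_j^{-1}$. Then the sequence $(c_1, c_2, \dots, c_{2g+1})$ repeated $2g+2$ times (length $(2g+1)(2g+2)$) is Hurwitz equivalent up to simultaneous conjugation to the $(g+1)$-fold repetition of the block $(\bar d_2, \bar d_4, \dots, \bar d_{2g}, e_2, e_4, \dots, e_{2g}, c_1, c_3, \dots, c_{2g-1}, c_{2g+1}, \dots, c_{2g+1})$, where in each block $c_{2g+1}$ is repeated $g+2$ times. -/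

import Mathlib

/-- One elementary (Hurwitz) transformation of sequences in a group. -/
def HurwitzStep {G : Type*} [Group G] (s t : List G) : Prop :=
  ∃ (l₁ l₂ : List G) (x y : G),
    (s = l₁ ++ x :: y :: l₂ ∧ t = l₁ ++ (x * y * x⁻¹) :: x :: l₂) ∨
    (s = l₁ ++ x :: y :: l₂ ∧ t = l₁ ++ y :: (y⁻¹ * x * y) :: l₂)

/-- One move of Hurwitz equivalence up to simultaneous conjugation. -/
def HurwitzStepC {G : Type*} [Group G] (s t : List G) : Prop :=
  HurwitzStep s t ∨ ∃ ψ : G, t = s.map fun w => ψ * w * ψ⁻¹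

/-- Hurwitz equivalence up to simultaneous conjugation. -/
def HurwitzEquivC {G : Type*} [Group G] : List G → List G → Prop :=
  Relation.ReflTransGen HurwitzStepC

/-- The sequence `a m, a (m+1), …, a k` (ascending indices). -/
def seqAsc {G : Type*} (a : ℕ → G) (m k : ℕ) : List G :=
  (List.range (k + 1 - m)).map fun i => a (m + i)

/-!
Sequences modulo elementary transformations form a monoid under concatenation, in which
`[x] * [y] = [z] * [x]` whenever `x * y = z * x` in `G`; the braid relations therefore hold between
the classes of the `c i`. Put `δ = [c 1] ⋯ [c (2g+1)]`, `r i = [c (2i+1)]`,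
`t j = [d̄ (2j+2)] * [e (2j+2)]`, `T = t 0 ⋯ t (g-1)` and `R = r 0 ⋯ r g`. The braid relations give
`δ ^ 2 = T * R ^ 2`. Conjugation by `t j` exchanges `r j` and `r (j+1)`, so conjugation by `T`, and
also by `T * R`, permutes `r 0, …, r g` cyclically. The block is `T * R * r g ^ (g+1)`; in its
`(g+1)`-st power, moving the factors `r g ^ (g+1)` to the left turns them into one power of each
`r i`, whence the value `R ^ (g+1) * (T * R) ^ (g+1) = (T * R ^ 2) ^ (g+1) = δ ^ (2g+2)`.
-/

section Sequences

variable {M N : Type*}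

theorem map_seqAsc (f : M → N) (a : ℕ → M) (m k : ℕ) :
    (seqAsc a m k).map f = seqAsc (fun i => f (a i)) m k := by
  simp only [seqAsc, List.map_map, Function.comp_def]

theorem seqAsc_succ_right (a : ℕ → M) {m k : ℕ} (h : m ≤ k + 1) :
    seqAsc a m (k + 1) = seqAsc a m k ++ [a (k + 1)] := by
  rw [seqAsc, seqAsc, Nat.succ_sub h, List.range_succ, List.map_append, List.map_singleton,
    Nat.add_sub_cancel' h]

end Sequences

section RangeProducts

variable {M : Type*} [Monoid M]

theorem commute_prod_range {f : ℕ → M} {n : ℕ} {z : M} (h : ∀ i < n, Commute (f i) z) :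
    Commute ((List.range n).map f).prod z := by
  refine Commute.list_prod_left _ _ fun a ha => ?_
  obtain ⟨i, hi, rfl⟩ := List.mem_map.1 ha
  exact h i (List.mem_range.1 hi)

theorem prod_range_mul_of_commute {x y : ℕ → M} {n : ℕ}
    (h : ∀ j < n, ∀ i < j, Commute (y i) (x j)) :
    ((List.range n).map fun i => x i * y i).prod =
      ((List.range n).map x).prod * ((List.range n).map y).prod := by
  induction n with
  | zero => simp
  | succ n ih =>
    have hyx : Commute ((List.range n).map y).prod (x n) :=
      commute_prod_range (h n n.lt_succ_self)
    simp only [List.prod_range_succ]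
    rw [ih fun j hj => h j (hj.trans n.lt_succ_self), mul_assoc, ← mul_assoc _ (x n), hyx.eq]
    simp only [mul_assoc]

end RangeProducts

section CyclicConjugation

variable {M : Type*} [Monoid M]

/-- Conjugation by `a` permutes `r 0, …, r n` cyclically. No inverses are available in a monoid,
so `a * u = v * a` plays the role of `a * u * a⁻¹ = v`. -/
structure Rotates (a : M) (r : ℕ → M) (n : ℕ) : Prop where
  succ : ∀ i < n, SemiconjBy a (r i) (r (i + 1))
  last : SemiconjBy a (r n) (r 0)

/-- Conjugation by `t j`, for `j < n`, acts on `r 0, …, r n` as the adjacent transposition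
`(j j+1)` of the indices. -/
def ActsByAdjacentSwaps (t r : ℕ → M) (n : ℕ) : Prop :=
  ∀ j < n, ∀ i ≤ n, SemiconjBy (t j) (r i) (r (Equiv.swap j (j + 1) i))

namespace ActsByAdjacentSwaps

variable {t r : ℕ → M} {n : ℕ}

theorem commute (h : ActsByAdjacentSwaps t r n) {i j : ℕ} (hj : j < n) (hi : i ≤ n) (hij : i ≠ j)
    (hij' : i ≠ j + 1) : Commute (t j) (r i) := by
  have hswap := h j hj i hi
  rwa [Equiv.swap_apply_of_ne_of_ne hij hij'] at hswap

theorem rotates_prod (h : ActsByAdjacentSwaps t r n) :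
    Rotates ((List.range n).map t).prod r n := by
  induction n with
  | zero => exact ⟨fun i hi => absurd hi i.not_lt_zero, SemiconjBy.one_left _⟩
  | succ n ih =>
    have ih := ih fun j hj i hi => h j (by lia) i (by lia)
    rw [List.prod_range_succ]
    refine ⟨fun i hi => ?_, ?_⟩
    · rcases Nat.lt_succ_iff_lt_or_eq.1 hi with hin | rfl
      · exact (ih.succ i hin).mul_left (h.commute (by lia) (by lia) (by lia) (by lia))
      · have hcomm : Commute ((List.range i).map t).prod (r (i + 1)) :=
          commute_prod_range fun j hj => h.commute (by lia) (by lia) (by lia) (by lia)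
        have hswap : SemiconjBy (t i) (r i) (r (i + 1)) := by
          simpa only [Equiv.swap_apply_left] using h i (by lia) i (by lia)
        exact SemiconjBy.mul_left hcomm hswap
    · have hswap : SemiconjBy (t n) (r (n + 1)) (r n) := by
        simpa only [Equiv.swap_apply_right] using h n (by lia) (n + 1) le_rfl
      exact ih.last.mul_left hswap

end ActsByAdjacentSwaps

namespace Rotates

variable {a : M} {r : ℕ → M} {n : ℕ}

theorem commute_prod (h : Rotates a r n) (hr : ∀ i ≤ n, ∀ j ≤ n, Commute (r i) (r j)) :
    Commute a ((List.range (n + 1)).map r).prod := by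
  have hshift : ∀ k ≤ n, SemiconjBy a ((List.range k).map r).prod
      ((List.range k).map fun i => r (i + 1)).prod := by
    intro k hk
    induction k with
    | zero => exact SemiconjBy.one_right a
    | succ k ih =>
      simp only [List.prod_range_succ]
      exact (ih (by lia)).mul_right (h.succ k hk)
  have hfront : Commute ((List.range n).map fun i => r (i + 1)).prod (r 0) :=
    commute_prod_range fun i hi => hr (i + 1) hi 0 n.zero_le
  have hprod := (hshift n le_rfl).mul_right h.last
  rwa [← List.prod_range_succ, hfront.eq, ← List.prod_range_succ'] at hprod

theorem mul_right (h : Rotates a r n) {b : M} (hb : ∀ i ≤ n, Commute b (r i)) :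
    Rotates (a * b) r n :=
  ⟨fun i hi => (h.succ i hi).mul_left (hb i hi.le), h.last.mul_left (hb n le_rfl)⟩

theorem semiconjBy_pow (h : Rotates a r n) {m : ℕ} (hm : m ≤ n) :
    SemiconjBy (a ^ (m + 1)) (r n) (r m) := by
  induction m with
  | zero => simpa only [zero_add, pow_one] using h.last
  | succ m ih =>
    rw [pow_succ' a (m + 1)]
    exact (h.succ m hm).mul_left (ih (by lia))

theorem mul_pow_eq (h : Rotates a r n) (hr : ∀ i ≤ n, ∀ j ≤ n, Commute (r i) (r j)) (k : ℕ)
    {m : ℕ} (hm : m ≤ n + 1) :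
    (a * r n ^ k) ^ m = ((List.range m).map r).prod ^ k * a ^ m := by
  induction m with
  | zero => simp
  | succ m ih =>
    have hcomm : Commute ((List.range m).map r).prod (r m) :=
      commute_prod_range fun i hi => hr i (by lia) m (by lia)
    have hmove := (h.semiconjBy_pow (show m ≤ n by lia)).pow_right k
    rw [List.prod_range_succ, hcomm.mul_pow]
    calc (a * r n ^ k) ^ (m + 1)
        = ((List.range m).map r).prod ^ k * (a ^ (m + 1) * r n ^ k) := by
          rw [pow_succ, ih (by lia), pow_succ]; simp only [mul_assoc]
      _ = ((List.range m).map r).prod ^ k * r m ^ k * a ^ (m + 1) := by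
          rw [hmove.eq, mul_assoc]

theorem mul_prod_mul_pow_eq (h : Rotates a r n) (hr : ∀ i ≤ n, ∀ j ≤ n, Commute (r i) (r j)) :
    (a * ((List.range (n + 1)).map r).prod * r n ^ (n + 1)) ^ (n + 1) =
      (a * ((List.range (n + 1)).map r).prod ^ 2) ^ (n + 1) := by
  have hrot := h.mul_right fun j hj =>
    commute_prod_range (n := n + 1) fun i hi => hr i (by lia) j hj
  have hcomm := h.commute_prod hr
  rw [hrot.mul_pow_eq hr _ le_rfl, ← (hcomm.symm.mul_right (Commute.refl _)).mul_pow,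
    ← mul_assoc, ← hcomm.eq, mul_assoc, ← pow_two]

end Rotates

end CyclicConjugation

section BraidWords

variable {M : Type*} [Monoid M]

theorem semiconjBy_braid_left {p q r : M} (hpq : p * q * p = q * p * q)
    (hqr : q * r * q = r * q * r) (hpr : Commute p r) : SemiconjBy (q * p * r * q) p r :=
  calc q * p * r * q * p = q * r * (p * q * p) := by
        rw [mul_assoc q p r, hpr.eq]; simp only [mul_assoc]
    _ = (q * r * q) * p * q := by rw [hpq]; simp only [mul_assoc]
    _ = r * q * (r * p) * q := by rw [hqr]; simp only [mul_assoc]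
    _ = r * (q * p * r * q) := by rw [← hpr.eq]; simp only [mul_assoc]

theorem semiconjBy_braid_right {p q r : M} (hpq : p * q * p = q * p * q)
    (hqr : q * r * q = r * q * r) (hpr : Commute p r) : SemiconjBy (q * p * r * q) r p := by
  rw [mul_assoc q p r, hpr.eq, ← mul_assoc]
  exact semiconjBy_braid_left hqr.symm hpq.symm hpr.symm

theorem sq_mul_braid {d p q r : M} (hpq : p * q * p = q * p * q) (hqr : q * r * q = r * q * r)
    (hpr : Commute p r) (hdq : Commute d q) (hdr : Commute d r) :
    (d * p * q * r) ^ 2 = (d * p) ^ 2 * (q * p * r * q) :=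
  calc (d * p * q * r) ^ 2 = d * p * (q * r * d) * p * q * r := by
        rw [pow_two]; simp only [mul_assoc]
    _ = d * p * d * q * (r * p) * q * r := by
        rw [← (hdq.mul_right hdr).eq]; simp only [mul_assoc]
    _ = d * p * d * q * p * (r * q * r) := by rw [← hpr.eq]; simp only [mul_assoc]
    _ = d * p * d * (q * p * q) * r * q := by rw [← hqr]; simp only [mul_assoc]
    _ = (d * p) ^ 2 * (q * p * r * q) := by rw [← hpq, pow_two]; simp only [mul_assoc]

theorem mul_mul_sq_of_semiconjBy {p q r x y : M} (hpq : p * q * p = q * p * q)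
    (hpr : Commute p r) (hx : SemiconjBy q r x) (hy : SemiconjBy p q y) :
    x * y * p ^ 2 = q * p * r * q :=
  calc x * y * p ^ 2 = x * (y * p) * p := by rw [pow_two]; simp only [mul_assoc]
    _ = x * (p * q * p) := by rw [← hy.eq]; simp only [mul_assoc]
    _ = (x * q) * p * q := by rw [hpq]; simp only [mul_assoc]
    _ = q * (r * p) * q := by rw [← hx.eq]; simp only [mul_assoc]
    _ = q * p * r * q := by rw [← hpr.eq, ← mul_assoc]

/-- The braid relations for `c 1, …, c n`, stated for a monoid because they are also used for
classes of sequences. -/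
structure BraidRelations (c : ℕ → M) (n : ℕ) : Prop where
  braid : ∀ i, 1 ≤ i → i + 1 ≤ n → c i * c (i + 1) * c i = c (i + 1) * c i * c (i + 1)
  comm : ∀ i j, 1 ≤ i → j ≤ n → i + 2 ≤ j → c i * c j = c j * c i

namespace BraidRelations

variable {c : ℕ → M} {n : ℕ}

theorem mono {m : ℕ} (hc : BraidRelations c n) (h : m ≤ n) : BraidRelations c m :=
  ⟨fun i hi him => hc.braid i hi (him.trans h),
    fun i j hi hjm hij => hc.comm i j hi (hjm.trans h) hij⟩

theorem commute (hc : BraidRelations c n) {i j : ℕ} (hi : 1 ≤ i) (hin : i ≤ n) (hj : 1 ≤ j)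
    (hjn : j ≤ n) (hij : i ≠ j + 1) (hji : j ≠ i + 1) : Commute (c i) (c j) := by
  obtain rfl | h | h : i = j ∨ i + 2 ≤ j ∨ j + 2 ≤ i := by lia
  · exact Commute.refl _
  · exact hc.comm i j hi hjn h
  · exact (hc.comm j i hj hin h).symm

theorem commute_odd (hc : BraidRelations c (2 * n + 1)) :
    ∀ i ≤ n, ∀ j ≤ n, Commute (c (2 * i + 1)) (c (2 * j + 1)) := fun i hi j hj =>
  hc.commute (by lia) (by lia) (by lia) (by lia) (by lia) (by lia)

theorem commute_prod_seqAsc (hc : BraidRelations c n) {k j : ℕ} (hkj : k + 2 ≤ j) (hj : j ≤ n) :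
    Commute (seqAsc c 1 k).prod (c j) :=
  commute_prod_range fun i hi => hc.comm (1 + i) j (by lia) hj (by lia)

theorem prod_seqAsc_sq (hc : BraidRelations c (2 * n + 1)) :
    (seqAsc c 1 (2 * n + 1)).prod ^ 2 =
      ((List.range n).map fun j =>
        c (2 * j + 2) * c (2 * j + 1) * c (2 * j + 3) * c (2 * j + 2)).prod *
        c (2 * n + 1) ^ 2 := by
  induction n with
  | zero => simp [seqAsc]
  | succ n ih =>
    have hpq := hc.braid (2 * n + 1) (by lia) (by lia)
    have hqr := hc.braid (2 * n + 2) (by lia) (by lia)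
    have hpr : Commute (c (2 * n + 1)) (c (2 * n + 3)) :=
      hc.commute (by lia) (by lia) (by lia) (by lia) (by lia) (by lia)
    have hsplit (k : ℕ) : (seqAsc c 1 (k + 1)).prod = (seqAsc c 1 k).prod * c (k + 1) := by
      rw [seqAsc_succ_right c (by lia), List.prod_append, List.prod_singleton]
    have hsq : (seqAsc c 1 (2 * n + 3)).prod ^ 2 = (seqAsc c 1 (2 * n + 1)).prod ^ 2 *
        (c (2 * n + 2) * c (2 * n + 1) * c (2 * n + 3) * c (2 * n + 2)) := by
      rw [hsplit (2 * n + 2), hsplit (2 * n + 1), hsplit (2 * n)]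
      exact sq_mul_braid hpq hqr hpr (hc.commute_prod_seqAsc (by lia) (by lia))
        (hc.commute_prod_seqAsc (by lia) (by lia))
    have hmove := ((semiconjBy_braid_right hpq hqr hpr).pow_right 2).eq
    rw [show 2 * (n + 1) + 1 = 2 * n + 3 by lia, hsq, ih (hc.mono (by lia)), mul_assoc, ← hmove,
      ← mul_assoc, List.prod_range_succ]

theorem prod_seqAsc_pow_eq (hc : BraidRelations c (2 * n + 1)) {t : ℕ → M}
    (ht : ActsByAdjacentSwaps t (fun i => c (2 * i + 1)) n)
    (hsq : ∀ j < n, t j * c (2 * j + 1) ^ 2 =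
      c (2 * j + 2) * c (2 * j + 1) * c (2 * j + 3) * c (2 * j + 2)) :
    (seqAsc c 1 (2 * n + 1)).prod ^ (2 * n + 2) =
      (((List.range n).map t).prod * ((List.range n).map fun j => c (2 * j + 1)).prod *
        c (2 * n + 1) ^ (n + 2)) ^ (n + 1) := by
  set r : ℕ → M := fun i => c (2 * i + 1) with hr
  have hrr : ∀ i ≤ n, ∀ j ≤ n, Commute (r i) (r j) := hc.commute_odd
  have hsquares (m : ℕ) (hm : m ≤ n + 1) :
      ((List.range m).map fun j => r j ^ 2).prod = ((List.range m).map r).prod ^ 2 := by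
    simp only [pow_two]
    exact prod_range_mul_of_commute fun j hj i hi => hrr i (by lia) j (by lia)
  have hwords : ((List.range n).map fun j =>
      c (2 * j + 2) * c (2 * j + 1) * c (2 * j + 3) * c (2 * j + 2)).prod =
      ((List.range n).map t).prod * ((List.range n).map fun j => r j ^ 2).prod := by
    rw [← prod_range_mul_of_commute fun j hj i hi =>
      ((ht.commute hj (by lia) (by lia) (by lia)).pow_right 2).symm]
    exact congrArg List.prod (List.map_congr_left fun j hj => (hsq j (List.mem_range.1 hj)).symm)
  have hcoxeter : (seqAsc c 1 (2 * n + 1)).prod ^ 2 =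
      ((List.range n).map t).prod * ((List.range (n + 1)).map r).prod ^ 2 := by
    rw [hc.prod_seqAsc_sq, hwords, mul_assoc, ← hsquares (n + 1) le_rfl, List.prod_range_succ]
  calc (seqAsc c 1 (2 * n + 1)).prod ^ (2 * n + 2)
      = (((List.range n).map t).prod * ((List.range (n + 1)).map r).prod ^ 2) ^ (n + 1) := by
        rw [← hcoxeter, ← pow_mul, mul_add_one]
    _ = (((List.range n).map t).prod * ((List.range (n + 1)).map r).prod *
          r n ^ (n + 1)) ^ (n + 1) := (ht.rotates_prod.mul_prod_mul_pow_eq hrr).symm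
    _ = _ := by
        rw [List.prod_range_succ, pow_succ' _ (n + 1)]
        simp only [hr, mul_assoc]

end BraidRelations

end BraidWords

section ConjugatedGenerators

variable {G : Type*} [Group G] {c : ℕ → G}

/-- The element `d̄ j = (c (j+1))⁻¹ * c j * c (j+1)`. -/
def dBar (c : ℕ → G) (j : ℕ) : G :=
  (c (j + 1))⁻¹ * c j * c (j + 1)

/-- The element `e (j+1) = c j * c (j+1) * (c j)⁻¹`; the index is shifted by one to avoid
subtraction. -/
def eSucc (c : ℕ → G) (j : ℕ) : G :=
  c j * c (j + 1) * (c j)⁻¹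

theorem commute_dBar {z : G} {j : ℕ} (h : Commute z (c j)) (h' : Commute z (c (j + 1))) :
    Commute z (dBar c j) :=
  (h'.inv_right.mul_right h).mul_right h'

theorem commute_eSucc {z : G} {j : ℕ} (h : Commute z (c j)) (h' : Commute z (c (j + 1))) :
    Commute z (eSucc c j) :=
  (h.mul_right h').mul_right h.inv_right

theorem semiconjBy_eSucc (c : ℕ → G) (j : ℕ) : SemiconjBy (c j) (c (j + 1)) (eSucc c j) :=
  SemiconjBy.conj_mk _ _

theorem semiconjBy_dBar {j : ℕ} (h : c j * c (j + 1) * c j = c (j + 1) * c j * c (j + 1)) :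
    SemiconjBy (c j) (c (j + 1)) (dBar c j) := by
  rw [SemiconjBy, dBar, mul_assoc, mul_assoc, eq_inv_mul_iff_mul_eq, ← mul_assoc, ← mul_assoc, h]

namespace BraidRelations

variable {n : ℕ}

theorem dBar_mul_eSucc_eq (hc : BraidRelations c n) {i : ℕ} (hi : 1 ≤ i) (hin : i + 2 ≤ n) :
    dBar c (i + 1) * eSucc c i = c (i + 1) * c i * c (i + 2) * c (i + 1) * (c i ^ 2)⁻¹ :=
  eq_mul_inv_of_mul_eq <|
    mul_mul_sq_of_semiconjBy (hc.braid i hi (by lia)) (hc.comm i (i + 2) hi hin le_rfl)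
      (semiconjBy_dBar (hc.braid (i + 1) (by lia) hin)) (semiconjBy_eSucc c i)

theorem semiconjBy_dBar_mul_eSucc_left (hc : BraidRelations c n) {i : ℕ} (hi : 1 ≤ i)
    (hin : i + 2 ≤ n) : SemiconjBy (dBar c (i + 1) * eSucc c i) (c i) (c (i + 2)) := by
  rw [hc.dBar_mul_eSucc_eq hi hin]
  exact (semiconjBy_braid_left (hc.braid i hi (by lia)) (hc.braid (i + 1) (by lia) hin)
    (hc.comm i (i + 2) hi hin le_rfl)).mul_left (Commute.self_pow (c i) 2).symm.inv_left

theorem semiconjBy_dBar_mul_eSucc_right (hc : BraidRelations c n) {i : ℕ} (hi : 1 ≤ i)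
    (hin : i + 2 ≤ n) : SemiconjBy (dBar c (i + 1) * eSucc c i) (c (i + 2)) (c i) := by
  have hcomm : Commute (c i) (c (i + 2)) := hc.comm i (i + 2) hi hin le_rfl
  rw [hc.dBar_mul_eSucc_eq hi hin]
  exact (semiconjBy_braid_right (hc.braid i hi (by lia)) (hc.braid (i + 1) (by lia) hin)
    hcomm).mul_left (hcomm.pow_left 2).inv_left

theorem actsByAdjacentSwaps (hc : BraidRelations c (2 * n + 1)) :
    ActsByAdjacentSwaps (fun j => dBar c (2 * j + 2) * eSucc c (2 * j + 1))
      (fun i => c (2 * i + 1)) n := by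
  intro j hj i hi
  by_cases hij : i = j
  · subst hij
    rw [Equiv.swap_apply_left]
    exact hc.semiconjBy_dBar_mul_eSucc_left (by lia) (by lia)
  by_cases hij' : i = j + 1
  · subst hij'
    rw [Equiv.swap_apply_right]
    exact hc.semiconjBy_dBar_mul_eSucc_right (by lia) (by lia)
  rw [Equiv.swap_apply_of_ne_of_ne hij hij']
  have hcomm (k : ℕ) (hk : 2 * j + 1 ≤ k) (hk' : k ≤ 2 * j + 3) : Commute (c (2 * i + 1)) (c k) :=
    hc.commute (by lia) (by lia) (by lia) (by lia) (by lia) (by lia)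
  have hd : Commute (c (2 * i + 1)) (dBar c (2 * j + 2)) :=
    commute_dBar (hcomm _ (by lia) (by lia)) (hcomm _ (by lia) (by lia))
  have he : Commute (c (2 * i + 1)) (eSucc c (2 * j + 1)) :=
    commute_eSucc (hcomm _ (by lia) (by lia)) (hcomm _ (by lia) (by lia))
  exact (hd.mul_right he).symm

theorem commute_eSucc_dBar (hc : BraidRelations c n) {i j : ℕ} (hi : 1 ≤ i) (hij : i + 3 ≤ j)
    (hj : j + 1 ≤ n) : Commute (eSucc c i) (dBar c j) := by
  have hcomm (k : ℕ) (hik : i + 3 ≤ k) (hk : k ≤ n) : Commute (eSucc c i) (c k) :=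
    (commute_eSucc (hc.comm i k hi hk (by lia)).symm
      (hc.comm (i + 1) k (by lia) hk (by lia)).symm).symm
  exact commute_dBar (hcomm j hij (by lia)) (hcomm (j + 1) (by lia) hj)

end BraidRelations

end ConjugatedGenerators

section HurwitzMonoid

variable {G : Type*} [Group G]

/-- Hurwitz equivalence `∼` of sequences, without simultaneous conjugation. -/
def HurwitzEquiv : List G → List G → Prop :=
  Relation.ReflTransGen HurwitzStep

instance HurwitzStep.instSymm : Std.Symm (HurwitzStep (G := G)) := by
  constructor
  rintro _ _ ⟨l₁, l₂, x, y, ⟨rfl, rfl⟩ | ⟨rfl, rfl⟩⟩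
  · exact ⟨l₁, l₂, x * y * x⁻¹, x, Or.inr ⟨rfl, by simp [mul_assoc]⟩⟩
  · exact ⟨l₁, l₂, y, y⁻¹ * x * y, Or.inl ⟨rfl, by simp [mul_assoc]⟩⟩

theorem HurwitzStep.append (a b : List G) {s t : List G} (h : HurwitzStep s t) :
    HurwitzStep (a ++ s ++ b) (a ++ t ++ b) := by
  obtain ⟨l₁, l₂, x, y, h⟩ := h
  refine ⟨a ++ l₁, l₂ ++ b, x, y, ?_⟩
  rcases h with ⟨rfl, rfl⟩ | ⟨rfl, rfl⟩ <;> simp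

namespace HurwitzEquiv

variable {s t s' t' : List G}

theorem symm (h : HurwitzEquiv s t) : HurwitzEquiv t s :=
  Relation.ReflTransGen.stdSymm.symm _ _ h

theorem append (h : HurwitzEquiv s t) (h' : HurwitzEquiv s' t') :
    HurwitzEquiv (s ++ s') (t ++ t') :=
  Relation.ReflTransGen.trans
    (Relation.ReflTransGen.lift (· ++ s')
      (fun _ _ (hstep : HurwitzStep _ _) => by simpa using hstep.append [] s') _ _ h)
    (Relation.ReflTransGen.lift (t ++ ·)
      (fun _ _ (hstep : HurwitzStep _ _) => by simpa using hstep.append t []) _ _ h')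

theorem hurwitzEquivC (h : HurwitzEquiv s t) : HurwitzEquivC s t :=
  Relation.ReflTransGen.mono (fun _ _ => Or.inl) _ _ h

end HurwitzEquiv

variable (G) in
/-- Hurwitz equivalence as a congruence on the free monoid of sequences under concatenation. -/
def hurwitzCon : Con (FreeMonoid G) where
  r s t := HurwitzEquiv s.toList t.toList
  iseqv := ⟨fun _ => Relation.ReflTransGen.refl, HurwitzEquiv.symm, Relation.ReflTransGen.trans⟩
  mul' := HurwitzEquiv.append

variable (G) in
/-- The monoid of Hurwitz equivalence classes of sequences, multiplied by concatenation. -/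
abbrev HurwitzMonoid : Type _ :=
  (hurwitzCon G).Quotient

/-- The class of the one-term sequence `x`. -/
def hurwitzClass (x : G) : HurwitzMonoid G :=
  (hurwitzCon G).mk' (FreeMonoid.of x)

theorem prod_map_hurwitzClass_eq_iff {s t : List G} :
    (s.map hurwitzClass).prod = (t.map hurwitzClass).prod ↔ HurwitzEquiv s t := by
  have hmk (l : List G) :
      (l.map hurwitzClass).prod = (hurwitzCon G).mk' (FreeMonoid.ofList l) := by
    rw [← FreeMonoid.lift_ofList]
    exact congrArg (· (FreeMonoid.ofList l)) (FreeMonoid.lift_restrict (hurwitzCon G).mk')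
  rw [hmk, hmk]
  exact Con.eq (hurwitzCon G)

theorem semiconjBy_hurwitzClass {x y z : G} (h : SemiconjBy x y z) :
    SemiconjBy (hurwitzClass x) (hurwitzClass y) (hurwitzClass z) := by
  have hstep : HurwitzEquiv [x, y] [z, x] :=
    Relation.ReflTransGen.single ⟨[], [], x, y, Or.inl ⟨rfl, by simp [h.eq]⟩⟩
  simpa [SemiconjBy] using prod_map_hurwitzClass_eq_iff.2 hstep

theorem semiconjBy_hurwitzClass_mul {x y a b : G} (h : SemiconjBy (x * y) a b) :
    SemiconjBy (hurwitzClass x * hurwitzClass y) (hurwitzClass a) (hurwitzClass b) := by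
  have hx : SemiconjBy x (y * a * y⁻¹) b := by
    rw [SemiconjBy, ← mul_assoc, ← mul_assoc, h.eq]; group
  exact (semiconjBy_hurwitzClass hx).mul_left (semiconjBy_hurwitzClass (SemiconjBy.conj_mk y a))

theorem hurwitzClass_braid {x y : G} (h : x * y * x = y * x * y) :
    hurwitzClass x * hurwitzClass y * hurwitzClass x =
      hurwitzClass y * hurwitzClass x * hurwitzClass y := by
  have hyx : SemiconjBy (x * y) x y := by rw [SemiconjBy, h, mul_assoc]
  rw [(semiconjBy_hurwitzClass_mul hyx).eq, mul_assoc]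

theorem BraidRelations.map_hurwitzClass {c : ℕ → G} {n : ℕ} (hc : BraidRelations c n) :
    BraidRelations (fun i => hurwitzClass (c i)) n :=
  ⟨fun i hi hin => hurwitzClass_braid (hc.braid i hi hin),
    fun i j hi hj hij => semiconjBy_hurwitzClass (hc.comm i j hi hj hij)⟩

end HurwitzMonoid

theorem statement13_general {G : Type*} [Group G] (g : ℕ) {c : ℕ → G}
    (hc : BraidRelations c (2 * g + 1)) :
    HurwitzEquiv
      ((List.replicate (2 * g + 2) (seqAsc c 1 (2 * g + 1))).flatten)
      ((List.replicate (g + 1)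
        (((List.range g).map fun j => dBar c (2 * j + 2)) ++
          ((List.range g).map fun j => eSucc c (2 * j + 1)) ++
          ((List.range g).map fun j => c (2 * j + 1)) ++
          List.replicate (g + 2) (c (2 * g + 1)))).flatten) := by
  have hswaps : ActsByAdjacentSwaps
      (fun j => hurwitzClass (dBar c (2 * j + 2)) * hurwitzClass (eSucc c (2 * j + 1)))
      (fun i => hurwitzClass (c (2 * i + 1))) g := fun j hj i hi =>
    semiconjBy_hurwitzClass_mul (hc.actsByAdjacentSwaps j hj i hi)
  have hsq := fun j (hj : j < g) =>
    mul_mul_sq_of_semiconjBy (hc.map_hurwitzClass.braid (2 * j + 1) (by lia) (by lia))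
      (hc.map_hurwitzClass.comm (2 * j + 1) (2 * j + 3) (by lia) (by lia) (by lia))
      (semiconjBy_hurwitzClass (semiconjBy_dBar (hc.braid (2 * j + 2) (by lia) (by lia))))
      (semiconjBy_hurwitzClass (semiconjBy_eSucc c (2 * j + 1)))
  have hsplit := prod_range_mul_of_commute fun j (hj : j < g) i hi =>
    semiconjBy_hurwitzClass
      (hc.commute_eSucc_dBar (i := 2 * i + 1) (j := 2 * j + 2) (by lia) (by lia) (by lia))
  rw [← prod_map_hurwitzClass_eq_iff]
  simp only [List.map_flatten, List.prod_flatten, List.map_replicate, List.prod_replicate,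
    List.map_append, List.prod_append, List.map_map, Function.comp_def, map_seqAsc]
  rw [← hsplit]
  exact hc.map_hurwitzClass.prod_seqAsc_pow_eq hswaps hsq

/-- with `d̄ j = (c (j+1))⁻¹ * c j * c (j+1)` and
`e (j+1) = c j * c (j+1) * (c j)⁻¹`, the sequence `(c 1, …, c (2g+1))` repeated `2g+2`
times is Hurwitz equivalent up to simultaneous conjugation to the `(g+1)`-fold repetition
of the block `(d̄ 2, d̄ 4, …, d̄ (2g), e 2, e 4, …, e (2g), c 1, c 3, …, c (2g-1),
(c (2g+1))^{g+2})`. -/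
theorem statement13 {G : Type*} [Group G] (g : ℕ) (hg : 1 ≤ g) (c : ℕ → G)
    (hbraid : ∀ i, 1 ≤ i → i + 1 ≤ 2 * g + 1 →
      c i * c (i + 1) * c i = c (i + 1) * c i * c (i + 1))
    (hcomm : ∀ i j, 1 ≤ i → j ≤ 2 * g + 1 → i + 2 ≤ j → c i * c j = c j * c i) :
    HurwitzEquivC
      ((List.replicate (2 * g + 2) (seqAsc c 1 (2 * g + 1))).flatten)
      ((List.replicate (g + 1)
        (((List.range g).map fun j =>
            (c (2 * j + 3))⁻¹ * c (2 * j + 2) * c (2 * j + 3)) ++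
          ((List.range g).map fun j =>
            c (2 * j + 1) * c (2 * j + 2) * (c (2 * j + 1))⁻¹) ++
          ((List.range g).map fun j => c (2 * j + 1)) ++
          List.replicate (g + 2) (c (2 * g + 1)))).flatten) :=
  (statement13_general g ⟨hbraid, hcomm⟩).hurwitzEquivC
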